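/- Let A and B be bounded linear operators on a complex separable Hilbert space H such that A is normal. If both AB and BA are normal, then AA*B = BA*A (equivalently, B commutes with A*A). -/

import Mathlib

open ContinuousLinearMap

/-- A bounded operator `T` on a Hilbert space is *normal* if `T T* = T* T`. -/
def IsNormalOp {H : Type*} [NormedAddCommGroup H] [InnerProductSpace ℂ H] [CompleteSpace H]
    (T : H →L[ℂ] H) : Prop :=
  T * adjoint T = adjoint T * T

/-- If `A` is normal and both `AB` and `BA` are normal, then `A A* B = B A* A`,
i.e. `B` commutes with `A* A`. -/
theorem commute_of_normal {H : Type*} [NormedAddCommGroup H] [InnerProductSpace ℂ H]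
    [CompleteSpace H] [TopologicalSpace.SeparableSpace H]
    (A B : H →L[ℂ] H) (hA : IsNormalOp A) (hAB : IsNormalOp (A * B))
    (hBA : IsNormalOp (B * A)) :
    A * adjoint A * B = B * (adjoint A * A) := by
  have hAB' : IsStarNormal (A * B) := ⟨by
    rw [star_eq_adjoint]; exact hAB.symm⟩
  have hBA' : IsStarNormal (B * A) := ⟨by
    rw [star_eq_adjoint]; exact hBA.symm⟩
  have h : SemiconjBy A (B * A) (A * B) := (mul_assoc A B A).symm
  have h2 : A * star (B * A) = star (A * B) * A := fuglede_putnam_rosenblum hBA' hAB' h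
  have h3 := congrArg star h2
  simp only [star_mul, star_star] at h3
  have hA' : A * star A = star A * A := hA
  change A * star A * B = B * (star A * A)
  rw [← hA', hA', mul_assoc (star A) A B, ← h3, mul_assoc B A (star A), hA']
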